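/- The determinant of T equals x_1·x_2·⋯·x_n if n is even, and equals 0 if n is odd. -/

import Mathlib

open MvPolynomial

/-- The `n × n` matrix `T` over `ℂ[x_1, …, x_n]` with `T i i = 0`,
`T i j = x_j` for `i < j` and `T i j = -x_j` for `i > j`. -/
noncomputable def Tmat (n : ℕ) : Matrix (Fin n) (Fin n) (MvPolynomial (Fin n) ℂ) :=
  fun i j => if i = j then 0 else if i < j then X j else -X j

/-!
Let `S` be the matrix of signs of `T` and `J = 1 1ᵀ` the all-ones matrix. Since `J` has rank one,
`det (S + t J)` is an affine function of `t`, so `det S` is the mean of `det (S + J)` and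
`det (S - J)`. These two matrices are triangular, with diagonal entries `1` and `-1`, whence
`2 det S = 1 + (-1)ⁿ`. Over `ℤ` the factor `2` cancels, and the value of `det S` passes from `ℤ` to
every commutative ring. Finally `T` arises from `S` by scaling the columns by the `x_j`.
-/

open Matrix

section RankOneUpdate

variable {ι R : Type*} [Fintype ι] [DecidableEq ι] [CommRing R]

-- Bordering `A` by the column `u` and the row `-v` moves `v` into a single row of a determinant.
theorem det_add_vecMulVec_eq_det_updateRow (A : Matrix ι ι R) (u v : ι → R) :
    (A + vecMulVec u v).det =
      ((fromBlocks 1 0 (replicateCol Unit u) A).updateRow (Sum.inl ()) (Sum.elim 1 (-v))).det := by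
  have hborder : (fromBlocks 1 0 (replicateCol Unit u) A).updateRow (Sum.inl ())
      (Sum.elim 1 (-v)) = fromBlocks 1 (replicateRow Unit (-v)) (replicateCol Unit u) A := by
    ext (i | i) (j | j) <;> simp [updateRow_apply]
  have hschur : A - replicateCol Unit u * replicateRow Unit (-v) = A + vecMulVec u v := by
    rw [← vecMulVec_eq, vecMulVec_neg, sub_neg_eq_add]
  rw [hborder, det_fromBlocks_one₁₁, hschur]

theorem det_add_vecMulVec_add (A : Matrix ι ι R) (u v w : ι → R) :
    (A + vecMulVec u (v + w)).det + A.det =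
      (A + vecMulVec u v).det + (A + vecMulVec u w).det := by
  have hrow : Sum.elim (1 : Unit → R) (-(v + w)) + Sum.elim (1 : Unit → R) (-0) =
      Sum.elim (1 : Unit → R) (-v) + Sum.elim (1 : Unit → R) (-w) := by
    ext (i | i) <;> simp [add_comm]
  have hzero : A.det = (A + vecMulVec u 0).det := by rw [vecMulVec_zero, add_zero]
  rw [hzero]
  simp only [det_add_vecMulVec_eq_det_updateRow, ← det_updateRow_add, hrow]

theorem det_add_vecMulVec_add_det_sub_vecMulVec (A : Matrix ι ι R) (u v : ι → R) :
    (A + vecMulVec u v).det + (A - vecMulVec u v).det = 2 * A.det := by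
  simpa [two_mul, vecMulVec_neg, ← sub_eq_add_neg] using (det_add_vecMulVec_add A u v (-v)).symm

end RankOneUpdate

section SkewOnes

/-- The skew-symmetric matrix, indexed by a linear order, all of whose entries above the diagonal
are `1`: the matrix of signs of `Tmat`. -/
def skewOnes (ι R : Type*) [LinearOrder ι] [Ring R] : Matrix ι ι R :=
  of fun i j => if i = j then 0 else if i < j then 1 else -1

variable (ι R : Type*) [LinearOrder ι]

theorem map_skewOnes {R S : Type*} [Ring R] [Ring S] (f : R →+* S) :
    (skewOnes ι R).map f = skewOnes ι S := by
  ext i j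
  simp [skewOnes, apply_ite f]

variable [Fintype ι] [CommRing R]

theorem det_skewOnes_add_ones : (skewOnes ι R + vecMulVec 1 1).det = 1 := by
  have htri : (skewOnes ι R + vecMulVec 1 1).IsUpperTriangular := fun i j (hji : j < i) => by
    simp [skewOnes, hji.ne', hji.not_gt]
  rw [det_of_isUpperTriangular htri]
  simp [skewOnes]

theorem det_skewOnes_sub_ones :
    (skewOnes ι R - vecMulVec 1 1).det = (-1) ^ Fintype.card ι := by
  have htri : (skewOnes ι R - vecMulVec 1 1).IsLowerTriangular :=
    fun i j (hij : i < j) => by simp [skewOnes, hij.ne, hij]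
  rw [det_of_isLowerTriangular _ htri]
  simp [skewOnes]

theorem two_mul_det_skewOnes : 2 * (skewOnes ι R).det = 1 + (-1) ^ Fintype.card ι := by
  rw [← det_add_vecMulVec_add_det_sub_vecMulVec _ 1 1, det_skewOnes_add_ones,
    det_skewOnes_sub_ones]

theorem det_skewOnes_int : (skewOnes ι ℤ).det = if Even (Fintype.card ι) then 1 else 0 := by
  have htwo := two_mul_det_skewOnes ι ℤ
  split_ifs with hcard
  · rw [hcard.neg_one_pow] at htwo
    lia
  · rw [(Nat.not_even_iff_odd.mp hcard).neg_one_pow] at htwo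
    lia

theorem det_skewOnes : (skewOnes ι R).det = if Even (Fintype.card ι) then 1 else 0 := by
  rw [← map_skewOnes ι (Int.castRingHom R), ← RingHom.mapMatrix_apply, ← RingHom.map_det,
    det_skewOnes_int, apply_ite (Int.castRingHom R), map_one, map_zero]

end SkewOnes

theorem det_Tmat_general {ι R : Type*} [LinearOrder ι] [Fintype ι] [CommRing R] (x : ι → R) :
    (of fun i j => if i = j then 0 else if i < j then x j else -x j).det =
      if Even (Fintype.card ι) then ∏ i, x i else 0 := by
  have hscale : (of fun i j => if i = j then 0 else if i < j then x j else -x j) =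
      of fun i j => x j * skewOnes ι R i j := by
    ext i j
    simp [skewOnes]
  rw [hscale, det_mul_row, det_skewOnes, mul_ite, mul_one, mul_zero]

/-- `det T = x_1 ⋯ x_n` if `n` is even, and `det T = 0` if `n` is odd. -/
theorem det_Tmat (n : ℕ) (hn : 1 ≤ n) :
    (Tmat n).det = if Even n then ∏ i : Fin n, X i else 0 :=
  (det_Tmat_general X).trans (by rw [Fintype.card_fin])
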